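/- arXiv:1704.03545 — 3 statements merged into one kernel-verified Lean document; each statement's English description precedes it below -/
import Mathlib

section
/- Let 𝒢 be a finite group of odd order and let (ρ, V) be a finite-dimensional complex representation of 𝒢. If V is self-dual, then there exists a 𝒢-invariant nondegenerate symmetric bilinear form on V. -/
/-!
Write `χ` for the character of `ρ`. Averaging over `G` and transposing is an endomorphism of the
space of bilinear forms on `V` whose trace is the Frobenius–Schur sum `|G|⁻¹ ∑ χ(g²)`. In odd order
squaring permutes `G`, so this sum is `|G|⁻¹ ∑ χ(g) = dim V^G ≥ 0`. If every invariant form were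
skew-symmetric, the same trace would be minus the dimension of the space of invariant forms, which
is positive when `V ≠ 0` and `χ(g⁻¹) = χ(g)`. Hence a nonzero symmetric invariant form exists. It is
nondegenerate on an invariant complement of its radical, and the radical again has a self-dual
character, so induction on the dimension applies to it.
-/

open Module Representation

section Trace

variable {R M : Type*} [CommRing R] [AddCommGroup M] [Module R M] [Module.Free R M]
  [Module.Finite R M]

theorem trace_eq_trace_comp_of_apply_eq_flip
    (T : LinearMap.BilinForm R M →ₗ[R] LinearMap.BilinForm R M) (f h : M →ₗ[R] M)
    (hT : ∀ B v w, T B v w = B (f w) (h v)) :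
    LinearMap.trace R _ T = LinearMap.trace R M (f ∘ₗ h) := by
  classical
  let b := Free.chooseBasis R M
  let formBasis : Basis _ R (LinearMap.BilinForm R M) :=
    (Matrix.stdBasis R _ _).map (LinearMap.toMatrix₂ b b).symm
  rw [LinearMap.trace_eq_matrix_trace R formBasis, LinearMap.trace_eq_matrix_trace R b,
    LinearMap.toMatrix_comp b b b]
  have hrepr (B) (p : _ × _) : formBasis.repr B p = B (b p.1) (b p.2) := by
    simp only [formBasis, Basis.map_repr, LinearEquiv.trans_apply, LinearEquiv.symm_symm,
      ← LinearMap.toMatrix₂_apply b b]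
    rfl
  have happly (p : _ × _) (v w : M) : formBasis p v w = b.repr v p.1 * b.repr w p.2 := by
    obtain ⟨i, j⟩ := p
    simp [formBasis, Matrix.stdBasis_eq_single, Matrix.single_apply, ite_and]
  simp only [Matrix.trace, Matrix.diag_apply, Matrix.mul_apply, LinearMap.toMatrix_apply, hT,
    hrepr, happly, Fintype.sum_prod_type]

end Trace

theorem sum_apply_pow_eq_sum_of_coprime_card {G M : Type*} [Group G] [Fintype G]
    [AddCommMonoid M] {n : ℕ} (hn : (Nat.card G).Coprime n) (f : G → M) :
    ∑ g, f (g ^ n) = ∑ g, f g :=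
  (powCoprime hn).sum_comp f

section InvariantForms

variable {k G V W : Type*} [CommRing k] [Group G] [AddCommGroup V] [Module k V]
  [AddCommGroup W] [Module k W] {ρ : Representation k G V} {σ : Representation k G W}

/-- The representation of `G` on the bilinear forms on `V`, that is, on `Hom(V, V^∨)`. -/
noncomputable def formRep (ρ : Representation k G V) :
    Representation k G (LinearMap.BilinForm k V) :=
  linHom ρ ρ.dual

theorem formRep_apply_apply (g : G) (B : LinearMap.BilinForm k V) (v w : V) :
    formRep ρ g B v w = B (ρ g⁻¹ v) (ρ g⁻¹ w) :=
  rfl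

/-- The space of `G`-invariant bilinear forms on `V`. -/
noncomputable abbrev invariantForms (ρ : Representation k G V) :
    Submodule k (LinearMap.BilinForm k V) :=
  invariants (V := LinearMap.BilinForm k V) (formRep ρ)

theorem mem_invariantForms_iff {B : LinearMap.BilinForm k V} :
    B ∈ invariantForms ρ ↔ ∀ g v w, B (ρ g v) (ρ g w) = B v w := by
  refine ⟨fun hB g v w => ?_, fun hB g => LinearMap.ext₂ (hB g⁻¹)⟩
  rw [← LinearMap.congr_fun₂ (hB g⁻¹) v w, formRep_apply_apply, inv_inv]

theorem flip_mem_invariantForms {B : LinearMap.BilinForm k V} (hB : B ∈ invariantForms ρ) :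
    LinearMap.flip B ∈ invariantForms ρ :=
  mem_invariantForms_iff.mpr fun g v w => mem_invariantForms_iff.mp hB g w v

theorem compl₁₂_mem_invariantForms {B : LinearMap.BilinForm k W} (hB : B ∈ invariantForms σ)
    (f : IntertwiningMap ρ σ) :
    B.compl₁₂ f.toLinearMap f.toLinearMap ∈ invariantForms ρ :=
  mem_invariantForms_iff.mpr fun g v w => by
    simp [f.isIntertwining, mem_invariantForms_iff.mp hB]

end InvariantForms

section Character

variable {k G V W : Type*} [Field k] [Group G] [AddCommGroup V] [Module k V]
  [FiniteDimensional k V] [AddCommGroup W] [Module k W] [FiniteDimensional k W]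
  {ρ : Representation k G V} {σ : Representation k G W}

theorem character_prod : (ρ.prod σ).character = ρ.character + σ.character :=
  funext fun g => LinearMap.trace_prodMap' (ρ g) (σ g)

theorem finrank_invariants_eq_of_character_eq [Finite G] [CharZero k]
    (h : ρ.character = σ.character) : finrank k ρ.invariants = finrank k σ.invariants := by
  have := Fintype.ofFinite G
  have : Invertible (Nat.card G : k) := invertibleOfNonzero (NeZero.ne _)
  have hcast : (finrank k ρ.invariants : k) = finrank k σ.invariants := by
    simp only [← card_inv_mul_sum_char_eq_finrank, h]
  exact_mod_cast hcast

theorem invariants_ne_bot_of_character_eq [Finite G] [CharZero k]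
    (h : ρ.character = σ.character) (hσ : σ.invariants ≠ ⊥) : ρ.invariants ≠ ⊥ := by
  rwa [← Submodule.one_le_finrank_iff, finrank_invariants_eq_of_character_eq h,
    Submodule.one_le_finrank_iff]

theorem invariantForms_ne_bot_of_character_dual_eq [Finite G] [CharZero k] [Nontrivial V]
    (h : ρ.dual.character = ρ.character) : invariantForms ρ ≠ ⊥ := by
  have hchar : character (V := LinearMap.BilinForm k V) (formRep ρ) =
      character (V := V →ₗ[k] V) (linHom ρ ρ) := by
    ext g
    rw [formRep, char_linHom, char_linHom, h]
  refine invariants_ne_bot_of_character_eq hchar ?_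
  exact (Submodule.ne_bot_iff _).mpr ⟨LinearMap.id, fun g => by ext; simp, one_ne_zero⟩

end Character

section FrobeniusSchur

variable {k G V : Type*} [Field k] [Group G] [Fintype G] [AddCommGroup V] [Module k V]
  [FiniteDimensional k V] {ρ : Representation k G V}

theorem card_inv_mul_sum_trace_comp_eq_mul_finrank_invariants [Invertible (Nat.card G : k)]
    (s : V →ₗ[k] V) (ε : k) (h : ∀ v ∈ ρ.invariants, s v = ε • v) :
    (Nat.card G : k)⁻¹ * ∑ g, LinearMap.trace k V (s ∘ₗ ρ g) = ε * finrank k ρ.invariants := by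
  have : Invertible (Fintype.card G : k) := by rwa [Fintype.card_eq_nat_card]
  have hcomp : s ∘ₗ ρ.averageMap = ε • ρ.averageMap :=
    LinearMap.ext fun v => h _ (ρ.averageMap_invariant v)
  calc (Nat.card G : k)⁻¹ * ∑ g, LinearMap.trace k V (s ∘ₗ ρ g)
    _ = LinearMap.trace k V (s ∘ₗ ρ.averageMap) := by
      simp [GroupAlgebra.average, ← Module.End.mul_eq_comp, Finset.mul_sum]
    _ = ε * finrank k ρ.invariants := by
      rw [hcomp, map_smul, ρ.isProj_averageMap.trace, smul_eq_mul]

theorem card_inv_mul_sum_char_sq_eq_mul_finrank_invariantForms [Invertible (Nat.card G : k)]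
    (ε : k) (h : ∀ B ∈ invariantForms ρ, LinearMap.flip B = ε • B) :
    (Nat.card G : k)⁻¹ * ∑ g, ρ.character (g ^ 2) = ε * finrank k (invariantForms ρ) := by
  have htrace (g : G) : LinearMap.trace k (LinearMap.BilinForm k V)
      (LinearMap.lflip.toLinearMap ∘ₗ formRep ρ g) = ρ.character (g⁻¹ ^ 2) := by
    rw [character, pow_two, map_mul]
    exact trace_eq_trace_comp_of_apply_eq_flip _ _ _ fun B v w => formRep_apply_apply g B w v
  calc (Nat.card G : k)⁻¹ * ∑ g, ρ.character (g ^ 2)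
    _ = (Nat.card G : k)⁻¹ * ∑ g, ρ.character (g⁻¹ ^ 2) :=
      congrArg _ (Equiv.sum_comp (.inv G) fun g => ρ.character (g ^ 2)).symm
    _ = ε * finrank k (invariantForms ρ) := by
      rw [Finset.sum_congr rfl fun g _ => (htrace g).symm]
      refine card_inv_mul_sum_trace_comp_eq_mul_finrank_invariants
        (V := LinearMap.BilinForm k V) (ρ := formRep ρ) LinearMap.lflip.toLinearMap ε ?_
      exact h

theorem invariantForms_eq_bot_of_odd_card [CharZero k] (hodd : Odd (Fintype.card G))
    (hskew : ∀ B ∈ invariantForms ρ, LinearMap.flip B = -B) : invariantForms ρ = ⊥ := by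
  have : Invertible (Nat.card G : k) := invertibleOfNonzero (NeZero.ne _)
  have hcoprime : (Nat.card G).Coprime 2 :=
    Nat.card_eq_fintype_card (α := G) ▸ hodd.coprime_two_right
  have hdim : (finrank k ρ.invariants : k) = -finrank k (invariantForms ρ) := by
    rw [← card_inv_mul_sum_char_eq_finrank, ← sum_apply_pow_eq_sum_of_coprime_card hcoprime,
      card_inv_mul_sum_char_sq_eq_mul_finrank_invariantForms (-1)
        fun B hB => (hskew B hB).trans (neg_one_smul k B).symm,
      neg_one_mul]
  rw [eq_neg_iff_add_eq_zero] at hdim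
  have hsum : finrank k ρ.invariants + finrank k (invariantForms ρ) = 0 := by exact_mod_cast hdim
  have hforms : finrank k (invariantForms ρ) = 0 := Nat.eq_zero_of_add_eq_zero_left hsum
  exact (Submodule.finrank_eq_zero (M := LinearMap.BilinForm k V)).mp hforms

theorem exists_isSymm_ne_zero_of_odd_card [CharZero k] [Nontrivial V]
    (hodd : Odd (Fintype.card G)) (h : ρ.dual.character = ρ.character) :
    ∃ B ∈ invariantForms ρ, LinearMap.BilinForm.IsSymm B ∧ B ≠ 0 := by
  by_contra! hzero
  refine invariantForms_ne_bot_of_character_dual_eq h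
    (invariantForms_eq_bot_of_odd_card hodd fun B hB => ?_)
  have hsymm : LinearMap.BilinForm.IsSymm (LinearMap.flip B + B) := ⟨fun v w => add_comm _ _⟩
  have hadd := hzero _ (add_mem (flip_mem_invariantForms hB) hB) hsymm
  exact eq_neg_of_add_eq_zero_left (G := LinearMap.BilinForm k V) hadd

end FrobeniusSchur

section Complement

variable {k G V : Type*} [CommRing k] [Group G] [AddCommGroup V] [Module k V]
  {ρ : Representation k G V} {p q : Subrepresentation ρ}

theorem isCompl_toSubmodule (h : IsCompl p q) : IsCompl p.toSubmodule q.toSubmodule where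
  disjoint := disjoint_iff.mpr (congrArg Subrepresentation.toSubmodule h.inf_eq_bot)
  codisjoint := codisjoint_iff.mpr (congrArg Subrepresentation.toSubmodule h.sup_eq_top)

/-- The decomposition of a representation as the direct sum of two complementary
subrepresentations. -/
noncomputable def prodEquivOfIsComplSubrepresentation (h : IsCompl p q) :
    (p.toRepresentation.prod q.toRepresentation).Equiv ρ :=
  .mk (p.toSubmodule.prodEquivOfIsCompl q.toSubmodule (isCompl_toSubmodule h)) fun g => by
    ext v <;> simp [Subrepresentation.toRepresentation]

end Complement

section Orthogonal

variable {k G V W : Type*} [CommRing k] [Group G] [AddCommGroup V] [Module k V]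
  [AddCommGroup W] [Module k W] {ρ : Representation k G V} {σ : Representation k G W}

/-- An orthogonal representation: one preserving a nondegenerate symmetric bilinear form. -/
def IsOrthogonalRep (ρ : Representation k G V) : Prop :=
  ∃ B ∈ invariantForms ρ, LinearMap.BilinForm.IsSymm B ∧ B.Nondegenerate

namespace IsOrthogonalRep

theorem of_subsingleton [Subsingleton V] : IsOrthogonalRep ρ :=
  ⟨0, zero_mem _, ⟨by simp⟩, fun _ _ => Subsingleton.elim _ _, fun _ _ => Subsingleton.elim _ _⟩

theorem of_equiv (hρ : IsOrthogonalRep ρ) (e : ρ.Equiv σ) : IsOrthogonalRep σ := by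
  obtain ⟨B, hinv, hsymm, hnondeg⟩ := hρ
  refine ⟨_, compl₁₂_mem_invariantForms hinv e.symm.toIntertwiningMap,
    ⟨fun v w => hsymm.eq _ _⟩, ?_⟩
  exact hnondeg.congr e.toLinearEquiv

theorem prod (hρ : IsOrthogonalRep ρ) (hσ : IsOrthogonalRep σ) : IsOrthogonalRep (ρ.prod σ) := by
  obtain ⟨B, hBinv, hBsymm, hBnondeg⟩ := hρ
  obtain ⟨C, hCinv, hCsymm, hCnondeg⟩ := hσ
  let D : LinearMap.BilinForm k (V × W) := B.compl₁₂ (.fst k V W) (.fst k V W) +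
    C.compl₁₂ (.snd k V W) (.snd k V W)
  have hDsymm : D.IsSymm := ⟨fun v w => congrArg₂ (· + ·) (hBsymm.eq _ _) (hCsymm.eq _ _)⟩
  refine ⟨D, add_mem (compl₁₂_mem_invariantForms hBinv (.fst k ρ σ))
    (compl₁₂_mem_invariantForms hCinv (.snd k ρ σ)), hDsymm,
    hDsymm.isRefl.nondegenerate_iff_separatingLeft.mpr fun v hv => ?_⟩
  exact Prod.ext (hBnondeg.1 _ fun x => by simpa [D] using hv (x, 0))
    (hCnondeg.1 _ fun y => by simpa [D] using hv (0, y))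

end IsOrthogonalRep

end Orthogonal

section OddOrder

variable {k G V : Type*} [Field k] [Group G] [AddCommGroup V] [Module k V]
  {ρ : Representation k G V}

theorem IsOrthogonalRep.character_dual_eq [FiniteDimensional k V] (hρ : IsOrthogonalRep ρ) :
    ρ.dual.character = ρ.character := by
  obtain ⟨B, hinv, -, hnondeg⟩ := hρ
  have hequiv (g : G) : B ∘ₗ ρ g = ρ.dual g ∘ₗ B := LinearMap.ext₂ fun v w => by
    simpa [Module.Dual.transpose_apply] using mem_invariantForms_iff.mp hinv g v (ρ g⁻¹ w)
  exact (char_iso (.mk (B.toDual hnondeg) hequiv)).symm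

theorem character_dual_eq_of_isCompl [FiniteDimensional k V] {p q : Subrepresentation ρ}
    (h : IsCompl p q) (hρ : ρ.dual.character = ρ.character)
    (hq : q.toRepresentation.dual.character = q.toRepresentation.character) :
    p.toRepresentation.dual.character = p.toRepresentation.character := by
  have hadd : ρ.character = p.toRepresentation.character + q.toRepresentation.character := by
    rw [← char_iso (prodEquivOfIsComplSubrepresentation h), character_prod]
  ext g
  have hρg := congrFun hρ g
  have hqg := congrFun hq g
  rw [char_dual] at hρg hqg ⊢
  rwa [hadd, Pi.add_apply, Pi.add_apply, hqg, add_left_inj] at hρg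

theorem exists_isCompl_isOrthogonalRep [Finite G] [NeZero (Nat.card G : k)]
    {B : LinearMap.BilinForm k V} (hinv : B ∈ invariantForms ρ) (hsymm : B.IsSymm) :
    ∃ p q : Subrepresentation ρ, p.toSubmodule = LinearMap.ker B ∧ IsCompl p q ∧
      IsOrthogonalRep q.toRepresentation := by
  let radical : Subrepresentation ρ := (invariantsEquivIntertwiningMap ρ ρ.dual ⟨B, hinv⟩).ker
  obtain ⟨q, hq⟩ := exists_isCompl radical
  refine ⟨radical, q, rfl, hq, B.restrict q.toSubmodule, ?_, hsymm.restrict _,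
    LinearMap.IsSymm.nondegenerate_restrict_of_isCompl_ker ⟨hsymm.eq⟩
      (isCompl_toSubmodule hq).symm⟩
  exact mem_invariantForms_iff.mpr fun g v w => mem_invariantForms_iff.mp hinv g v w

theorem isOrthogonalRep_of_odd_card [Fintype G] [CharZero k] [FiniteDimensional k V]
    (hodd : Odd (Fintype.card G)) (hρ : ρ.dual.character = ρ.character) : IsOrthogonalRep ρ := by
  induction hn : finrank k V using Nat.strong_induction_on generalizing V with
  | _ n ih =>
  subst hn
  cases subsingleton_or_nontrivial V
  · exact .of_subsingleton
  obtain ⟨B, hinv, hsymm, hB⟩ := exists_isSymm_ne_zero_of_odd_card hodd hρ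
  obtain ⟨p, q, hp, hpq, hq⟩ := exists_isCompl_isOrthogonalRep hinv hsymm
  have hlt : finrank k p.toSubmodule < finrank k V :=
    Submodule.finrank_lt (hp ▸ mt LinearMap.ker_eq_top.mp hB)
  have hpdual := character_dual_eq_of_isCompl hpq hρ hq.character_dual_eq
  exact ((ih _ hlt hpdual rfl).prod hq).of_equiv (prodEquivOfIsComplSubrepresentation hpq)

end OddOrder

theorem stmt3_general {k G V : Type*} [Field k] [CharZero k] [Group G] [Fintype G]
    (hodd : Odd (Fintype.card G)) [AddCommGroup V] [Module k V] [FiniteDimensional k V]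
    (ρ : Representation k G V)
    (hsd : ∃ e : V ≃ₗ[k] Module.Dual k V, ∀ (g : G) (v : V), e (ρ g v) = ρ.dual g (e v)) :
    ∃ B : V →ₗ[k] V →ₗ[k] k,
      Function.Bijective (fun v => B v) ∧
      (∀ v w : V, B v w = B w v) ∧
      (∀ (g : G) (v w : V), B (ρ g v) (ρ g w) = B v w) := by
  obtain ⟨e, he⟩ := hsd
  have hchar : ρ.character = ρ.dual.character := char_iso (.mk e fun g => LinearMap.ext (he g))
  obtain ⟨B, hinv, hsymm, hnondeg⟩ := isOrthogonalRep_of_odd_card hodd hchar.symm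
  exact ⟨B, (B.toDual hnondeg).bijective, hsymm.eq, mem_invariantForms_iff.mp hinv⟩

/-- A self-dual finite-dimensional complex representation of a finite group of odd order
carries an invariant nondegenerate symmetric bilinear form. -/
theorem stmt3 (G : Type*) [Group G] [Fintype G] (hodd : Odd (Fintype.card G))
    (V : Type*) [AddCommGroup V] [Module ℂ V] [FiniteDimensional ℂ V]
    (ρ : Representation ℂ G V)
    (hsd : ∃ e : V ≃ₗ[ℂ] Module.Dual ℂ V, ∀ (g : G) (v : V), e (ρ g v) = ρ.dual g (e v)) :
    ∃ B : V →ₗ[ℂ] V →ₗ[ℂ] ℂ,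
      Function.Bijective (fun v => B v) ∧
      (∀ v w : V, B v w = B w v) ∧
      (∀ (g : G) (v w : V), B (ρ g v) (ρ g w) = B v w) :=
  stmt3_general hodd ρ hsd
end

section
/- Let 𝒢 be a finite group of odd order. Then every irreducible self-dual finite-dimensional complex representation of 𝒢 is the trivial one-dimensional representation; that is, if (ρ, V) is irreducible with V ≅ V^∨ as representations of 𝒢, then dim V = 1 and ρ(g) is the identity for every g ∈ 𝒢. -/
/-!
An isomorphism `f : V ≅ V^∨` is an invariant bilinear form, so
`f (ρ (g ^ 2) v) w = f (ρ g v) (ρ g⁻¹ w)`. By Schur orthogonality, summing over `g` gives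
`dim V * ∑ g, f (ρ (g ^ 2) v) w = |G| * f w v`. When `|G|` is odd, squaring permutes `G`, so the
left-hand side is `dim V * f ((∑ g, ρ g) v) w`; hence `∑ g, ρ g ≠ 0`. Its image consists of
invariant vectors, and these fill the irreducible `V`.
-/

section Irreducible

variable {k G V : Type*} [Field k] [AddCommGroup V] [Module k V]

theorem isIrreducible_of_forall_invariant_eq_bot_or_top [Monoid G] [Nontrivial V]
    {ρ : Representation k G V}
    (h : ∀ W : Submodule k V, (∀ (g : G), ∀ v ∈ W, ρ g v ∈ W) → W = ⊥ ∨ W = ⊤) :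
    ρ.IsIrreducible where
  exists_pair_ne := ⟨⊥, ⊤, fun hbt => bot_ne_top (congrArg Subrepresentation.toSubmodule hbt)⟩
  eq_bot_or_eq_top σ :=
    (h σ.toSubmodule fun g _ hv => σ.apply_mem_toSubmodule g hv).imp
      (fun hσ => Subrepresentation.toSubmodule_injective hσ)
      (fun hσ => Subrepresentation.toSubmodule_injective hσ)

theorem isTrivial_of_invariants_ne_bot [Group G] (ρ : Representation k G V) [ρ.IsIrreducible]
    (h : ρ.invariants ≠ ⊥) : ρ.IsTrivial := by
  let σ : Subrepresentation ρ := ⟨ρ.invariants, fun g v hv => by rwa [hv g]⟩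
  have hσ : σ = ⊤ := (eq_bot_or_eq_top σ).resolve_left
    fun hσ => h (congrArg Subrepresentation.toSubmodule hσ)
  have htop : ρ.invariants = ⊤ := congrArg Subrepresentation.toSubmodule hσ
  exact ⟨fun g => LinearMap.ext fun v => (htop ▸ Submodule.mem_top : v ∈ ρ.invariants) g⟩

theorem finrank_eq_one_of_isTrivial [Monoid G] (ρ : Representation k G V) [ρ.IsIrreducible]
    [ρ.IsTrivial] : Module.finrank k V = 1 := by
  let toSubrep (W : Submodule k V) : Subrepresentation ρ := ⟨W, fun g v hv => by simpa using hv⟩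
  let e : Subrepresentation ρ ≃o Submodule k V :=
    { toFun := Subrepresentation.toSubmodule
      invFun := toSubrep
      map_rel_iff' := Iff.rfl }
  exact isSimpleModule_iff_finrank_eq_one.mp
    ((isSimpleModule_iff ..).mpr e.symm.isSimpleOrder)

theorem finiteDimensional_of_isIrreducible [Monoid G] [Finite G] (ρ : Representation k G V)
    [ρ.IsIrreducible] : FiniteDimensional k V :=
  have : Module.Finite k ρ.asModule := Module.Finite.trans (MonoidAlgebra k G) ρ.asModule
  Module.Finite.equiv ρ.asModuleEquiv

end Irreducible

theorem trace_norm_linHom {k G V : Type*} [CommRing k] [Group G] [Fintype G] [AddCommGroup V]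
    [Module k V] (ρ : Representation k G V) (A : Module.End k V) :
    LinearMap.trace k V ((ρ.linHom ρ).norm A) = Fintype.card G * LinearMap.trace k V A := by
  have trace_conj (g : G) : LinearMap.trace k V (ρ g * A * ρ g⁻¹) = LinearMap.trace k V A := by
    rw [LinearMap.trace_mul_cycle, ← map_mul, inv_mul_cancel, map_one, one_mul]
  calc LinearMap.trace k V ((ρ.linHom ρ).norm A)
      = ∑ g, LinearMap.trace k V (ρ g * A * ρ g⁻¹) := by
        simp only [Representation.norm, LinearMap.sum_apply, map_sum]
        rfl
    _ = Fintype.card G * LinearMap.trace k V A := by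
        simp [trace_conj]

section FiniteGroup

variable {k G V : Type*} [Field k] [Group G] [Fintype G] [AddCommGroup V] [Module k V]
  (ρ : Representation k G V)

theorem isTrivial_of_norm_ne_zero [ρ.IsIrreducible] (h : ρ.norm ≠ 0) : ρ.IsTrivial := by
  obtain ⟨v, hv⟩ := DFunLike.ne_iff.mp h
  exact isTrivial_of_invariants_ne_bot ρ
    ((Submodule.ne_bot_iff _).mpr ⟨ρ.norm v, fun g => ρ.self_norm_apply g v, hv⟩)

variable [IsAlgClosed k] [FiniteDimensional k V] [ρ.IsIrreducible]

-- Not divided by the dimension, whose image in `k` is not known in advance to be nonzero.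
theorem finrank_smul_norm_linHom (A : Module.End k V) :
    (Module.finrank k V : k) • (ρ.linHom ρ).norm A =
      (Fintype.card G * LinearMap.trace k V A) • 1 := by
  obtain ⟨c, hc⟩ : ∃ c : k, c • 1 = (ρ.linHom ρ).norm A := by
    let C : ρ.IntertwiningMap ρ := Representation.invariantsEquivIntertwiningMap ρ ρ
      ⟨(ρ.linHom ρ).norm A, fun g => (ρ.linHom ρ).self_norm_apply g A⟩
    obtain ⟨c, hc⟩ :=
      Representation.IsIrreducible.algebraMap_intertwiningMap_bijective_of_isAlgClosed.2 C
    exact ⟨c, congrArg Representation.IntertwiningMap.toLinearMap hc⟩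
  rw [← trace_norm_linHom ρ A, ← hc, map_smul, LinearMap.trace_one, smul_smul, smul_eq_mul,
    mul_comm]

theorem finrank_mul_sum_dual_apply_mul_dual_apply (φ ψ : Module.Dual k V) (v w : V) :
    Module.finrank k V * ∑ g, φ (ρ g v) * ψ (ρ g⁻¹ w) = Fintype.card G * (φ w * ψ v) := by
  have h := congrArg (fun C : Module.End k V => φ (C w))
    (finrank_smul_norm_linHom ρ (ψ.smulRight v))
  simpa [Representation.norm, LinearMap.sum_apply, mul_comm, mul_left_comm, mul_assoc] using h

theorem finrank_mul_sum_bilin_apply_apply_inv (B : V →ₗ[k] V →ₗ[k] k) (v w : V) :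
    Module.finrank k V * ∑ g, B (ρ g v) (ρ g⁻¹ w) = Fintype.card G * B w v := by
  let b := Module.finBasis k V
  have expand (x y : V) : B x y = ∑ i, b.coord i x * B (b i) y := by
    simpa [-Module.Basis.sum_repr] using congrArg (B · y) (b.sum_repr x).symm
  calc Module.finrank k V * ∑ g, B (ρ g v) (ρ g⁻¹ w)
      = ∑ i, Module.finrank k V * ∑ g, b.coord i (ρ g v) * B (b i) (ρ g⁻¹ w) := by
        rw [← Finset.mul_sum, Finset.sum_comm]
        simp only [← expand]
    _ = ∑ i, Fintype.card G * (b.coord i w * B (b i) v) := by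
        simp only [finrank_mul_sum_dual_apply_mul_dual_apply]
    _ = Fintype.card G * B w v := by
        rw [← Finset.mul_sum, ← expand]

theorem finrank_mul_sum_dual_apply_sq (f : ρ.IntertwiningMap ρ.dual) (v w : V) :
    Module.finrank k V * ∑ g, f (ρ (g ^ 2) v) w = Fintype.card G * f w v := by
  have apply_sq (g : G) : f (ρ (g ^ 2) v) w = f (ρ g v) (ρ g⁻¹ w) := by
    rw [pow_two, map_mul, Module.End.mul_apply, f.isIntertwining]
    rfl
  simp only [apply_sq]
  exact finrank_mul_sum_bilin_apply_apply_inv ρ f.toLinearMap v w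

theorem finrank_mul_dual_apply_norm (hodd : Odd (Fintype.card G)) (f : ρ.IntertwiningMap ρ.dual)
    (v w : V) : Module.finrank k V * f (ρ.norm v) w = Fintype.card G * f w v := by
  have hcop : (Nat.card G).Coprime 2 := by
    rwa [Nat.card_eq_fintype_card, Nat.coprime_two_right]
  have sum_sq : ∑ g, f (ρ (g ^ 2) v) w = ∑ g, f (ρ g v) w :=
    (powCoprime hcop).sum_comp fun g => f (ρ g v) w
  rw [← finrank_mul_sum_dual_apply_sq, sum_sq]
  simp [Representation.norm, LinearMap.sum_apply]

theorem norm_ne_zero_of_odd_card [NeZero (Fintype.card G : k)] (hodd : Odd (Fintype.card G))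
    {f : ρ.IntertwiningMap ρ.dual} (hf : f ≠ 0) : ρ.norm ≠ 0 := by
  contrapose! hf
  ext w v
  have h := finrank_mul_dual_apply_norm ρ hodd f v w
  simpa [hf, NeZero.ne] using h

end FiniteGroup

theorem stmt5_general {k G V : Type*} [Field k] [IsAlgClosed k] [Group G] [Fintype G]
    [NeZero (Fintype.card G : k)] (hodd : Odd (Fintype.card G)) [AddCommGroup V] [Module k V]
    (ρ : Representation k G V) [ρ.IsIrreducible] (e : ρ.Equiv ρ.dual) :
    Module.finrank k V = 1 ∧ ∀ g : G, ρ g = LinearMap.id := by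
  have : FiniteDimensional k V := finiteDimensional_of_isIrreducible ρ
  have : Nontrivial V := IsSimpleModule.nontrivial (MonoidAlgebra k G) ρ.asModule
  obtain ⟨v, hv⟩ := exists_ne (0 : V)
  have he : e.toIntertwiningMap ≠ 0 := fun h =>
    hv (e.toLinearEquiv.map_eq_zero_iff.mp congr($h v))
  have : ρ.IsTrivial := isTrivial_of_norm_ne_zero ρ (norm_ne_zero_of_odd_card ρ hodd he)
  exact ⟨finrank_eq_one_of_isTrivial ρ, ρ.isTrivial_def⟩

/-- Every irreducible self-dual finite-dimensional complex representation of a finite group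
of odd order is the trivial one-dimensional representation. -/
theorem stmt5 (G : Type*) [Group G] [Fintype G] (hodd : Odd (Fintype.card G))
    (V : Type*) [AddCommGroup V] [Module ℂ V] [FiniteDimensional ℂ V]
    (ρ : Representation ℂ G V) (hnz : Nontrivial V)
    (hirr : ∀ W : Submodule ℂ V, (∀ (g : G), ∀ v ∈ W, ρ g v ∈ W) → W = ⊥ ∨ W = ⊤)
    (hsd : ∃ e : V ≃ₗ[ℂ] Module.Dual ℂ V, ∀ (g : G) (v : V), e (ρ g v) = ρ.dual g (e v)) :
    Module.finrank ℂ V = 1 ∧ ∀ g : G, ρ g = LinearMap.id := by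
  have := isIrreducible_of_forall_invariant_eq_bot_or_top hirr
  exact hsd.elim fun e he => stmt5_general hodd ρ (.mk e fun g => LinearMap.ext (he g))
end

section
/- Let k be a finite field of odd cardinality q, let m ≥ 1, and let M be a module over the matrix ring M_m(k) which, viewed as a k-vector space via the scalar matrices, is finite-dimensional with dim_k M = d·m (every such module is isomorphic to a direct sum of d copies of the natural module k^m). For g ∈ GL_m(k), left multiplication by g is a permutation of the finite set M, and its sign is +1 if and only if ((det g)^((q−1)/2))^d = 1 in k. Consequently, the sign of this permutation equals +1 for every g ∈ GL_m(k) if and only if d is even. -/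
open Matrix

/-!
In characteristic different from two, a character `GL_n(F) → {±1}` kills every transvection,
because the transvection with parameter `c` is the square of the one with parameter `c / 2`.
Hence such a character is determined by its values on scalings of a single coordinate. Over a
field with `q` elements, `q` odd, scaling a coordinate by a generator of `Fˣ` permutes `F ^ n` as
a product of `q ^ (n - 1)` disjoint `(q - 1)`-cycles, an odd permutation. Therefore the sign of
any linear automorphism of a finite vector space is the quadratic character of its determinant
(Frobenius–Zolotarev).

By Morita equivalence a module `M` over the matrix ring is `V ^ n` for a vector space `V`. A
matrix `g` acts on it, in coordinates, as the Kronecker product of `g` with an identity matrix of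
size `d = dim V`, so its determinant on `M` is `(det g) ^ d`. Euler's criterion turns the
quadratic character into a power.
-/

section Generation

variable {n R F : Type*} [Fintype n] [DecidableEq n] [CommRing R] [Field F]

/-- The diagonal torus: the homomorphism sending a family of units to the invertible diagonal
matrix with these entries. Together with the transvections it generates `GL_n` over a field. -/
def diagonalGL (n R : Type*) [Fintype n] [DecidableEq n] [CommRing R] : (n → Rˣ) →* GL n R :=
  (Units.map (diagonalRingHom n R).toMonoidHom).comp
    (MulEquiv.piUnits (M := fun _ : n => R)).symm.toMonoidHom

theorem coe_diagonalGL (u : n → Rˣ) :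
    (diagonalGL n R u : Matrix n n R) = diagonal fun i => (u i : R) := rfl

theorem det_diagonalGL (u : n → Rˣ) : GeneralLinearGroup.det (diagonalGL n R u) = ∏ i, u i := by
  ext
  rw [GeneralLinearGroup.val_det_apply, coe_diagonalGL, det_diagonal, Units.coe_prod]

theorem generalLinearGroup_induction {P : GL n F → Prop} (diag : ∀ u, P (diagonalGL n F u))
    (transvec : ∀ t : TransvectionStruct n F, P t.toSpecialLinearGroup)
    (mul : ∀ g h, P g → P h → P (g * h)) (g : GL n F) : P g := by
  suffices ∀ h : GL n F, (h : Matrix n n F) = g → P h from this g rfl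
  refine diagonal_transvection_induction_of_det_ne_zero
    (fun A => ∀ h : GL n F, (h : Matrix n n F) = A → P h) g g.det_ne_zero ?_ ?_ ?_
  · intro D hD h hh
    rw [det_diagonal, Finset.prod_ne_zero_iff] at hD
    have : h = diagonalGL n F fun i => Units.mk0 (D i) (hD i (Finset.mem_univ i)) := Units.ext hh
    exact this ▸ diag _
  · intro t h hh
    have : h = t.toSpecialLinearGroup := Units.ext hh
    exact this ▸ transvec t
  · intro A B hA hB ihA ihB h hh
    have : h = GeneralLinearGroup.mkOfDetNeZero A hA * GeneralLinearGroup.mkOfDetNeZero B hB :=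
      Units.ext hh
    exact this ▸ mul _ _ (ihA _ rfl) (ihB _ rfl)

theorem map_transvection_eq_one (hF : ringChar F ≠ 2) (χ : SpecialLinearGroup n F →* ℤˣ)
    {i j : n} (hij : i ≠ j) (c : F) : χ (SpecialLinearGroup.transvection hij c) = 1 := by
  have hc : c = c / 2 + c / 2 := by
    have : (2 : F) ≠ 0 := Ring.two_ne_zero hF
    field_simp
    ring
  rw [hc, SpecialLinearGroup.transvection_add, map_mul, Int.units_mul_self]

theorem generalLinearGroup_monoidHom_ext (hF : ringChar F ≠ 2) {χ ψ : GL n F →* ℤˣ}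
    (h : ∀ i u, χ (diagonalGL n F (Pi.mulSingle i u)) = ψ (diagonalGL n F (Pi.mulSingle i u))) :
    χ = ψ := by
  have hdiag : χ.comp (diagonalGL n F) = ψ.comp (diagonalGL n F) :=
    MonoidHom.functions_ext (M := fun _ : n => Fˣ) ℤˣ _ _ h
  have htransvec (φ : GL n F →* ℤˣ) (t : TransvectionStruct n F) :
      φ t.toSpecialLinearGroup = 1 :=
    map_transvection_eq_one hF (φ.comp SpecialLinearGroup.toGL) t.hij t.c
  ext1 g
  induction g using generalLinearGroup_induction with
  | diag u => exact DFunLike.congr_fun hdiag u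
  | transvec t => rw [htransvec, htransvec]
  | mul g h hg hh => rw [map_mul, map_mul, hg, hh]

end Generation

section UnitsPerm

variable {F : Type*} [Field F] {u : Fˣ}

theorem toPerm_units_apply_ne_self_iff (hu : u ≠ 1) {y : F} :
    (MulAction.toPerm u : Equiv.Perm F) y ≠ y ↔ y ≠ 0 := by
  rw [MulAction.toPerm_apply, Units.smul_def, smul_eq_mul, ne_eq, mul_left_eq_self₀,
    or_iff_right (by simpa using hu)]

theorem isCycle_toPerm_of_forall_mem_zpowers (hu1 : u ≠ 1)
    (hu : ∀ v, v ∈ Subgroup.zpowers u) : (MulAction.toPerm u : Equiv.Perm F).IsCycle := by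
  refine ⟨1, (toPerm_units_apply_ne_self_iff hu1).2 one_ne_zero, fun y hy => ?_⟩
  obtain ⟨r, hr : u ^ r = _⟩ := hu (Units.mk0 y ((toPerm_units_apply_ne_self_iff hu1).1 hy))
  have hpow := map_zpow (MulAction.toPermHom Fˣ F) u r
  rw [hr] at hpow
  exact ⟨r, by simpa [Units.smul_def] using DFunLike.congr_fun hpow.symm 1⟩

end UnitsPerm

section FrobeniusZolotarev

variable {k : Type*} [Field k] [Fintype k] [DecidableEq k]

theorem toUnitHom_quadraticChar_eq_one_iff (hk : ringChar k ≠ 2) (a : kˣ) :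
    (quadraticChar k).toUnitHom a = 1 ↔ (a : k) ^ (Fintype.card k / 2) = 1 := by
  rw [← Units.val_eq_one, MulChar.coe_toUnitHom, quadraticChar_one_iff_isSquare a.ne_zero,
    FiniteField.isSquare_iff hk a.ne_zero]

theorem toUnitHom_quadraticChar_of_forall_mem_zpowers (hk : ringChar k ≠ 2) {u : kˣ}
    (hu : ∀ v, v ∈ Subgroup.zpowers u) : (quadraticChar k).toUnitHom u = -1 := by
  obtain ⟨a, ha⟩ := quadraticChar_exists_neg_one' hk
  refine (Int.units_eq_one_or _).resolve_left fun hu1 => ?_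
  have htriv : (quadraticChar k).toUnitHom = 1 := (MonoidHom.eq_iff_eq_on_generator hu _ 1).2 hu1
  have ha1 : (quadraticChar k).toUnitHom a = 1 := DFunLike.congr_fun htriv a
  rw [← Units.val_eq_one, MulChar.coe_toUnitHom, ha] at ha1
  exact absurd ha1 (by decide)

theorem sign_toPerm_units_of_forall_mem_zpowers (hk : ringChar k ≠ 2) {u : kˣ}
    (hu : ∀ v, v ∈ Subgroup.zpowers u) :
    Equiv.Perm.sign (MulAction.toPerm u : Equiv.Perm k) = -1 := by
  have hu1 : u ≠ 1 := by
    rintro rfl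
    have := toUnitHom_quadraticChar_of_forall_mem_zpowers hk hu
    rw [map_one] at this
    exact absurd this (by decide)
  have hsupp : (MulAction.toPerm u : Equiv.Perm k).support = Finset.univ.erase 0 := by
    ext y
    rw [Equiv.Perm.mem_support, toPerm_units_apply_ne_self_iff hu1]
    simp
  have hodd : Odd (Fintype.card k) := Nat.odd_iff.2 (FiniteField.odd_card_of_char_ne_two hk)
  rw [(isCycle_toPerm_of_forall_mem_zpowers hu1 hu).sign, hsupp,
    Finset.card_erase_of_mem (Finset.mem_univ _), Finset.card_univ,
    (Nat.Odd.sub_odd hodd odd_one).neg_one_pow]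

theorem sign_toPerm_units_eq_quadraticChar (hk : ringChar k ≠ 2) (u : kˣ) :
    Equiv.Perm.sign (MulAction.toPerm u : Equiv.Perm k) = (quadraticChar k).toUnitHom u := by
  obtain ⟨z, hz⟩ := IsCyclic.exists_generator (α := kˣ)
  have : Equiv.Perm.sign.comp (MulAction.toPermHom kˣ k) = (quadraticChar k).toUnitHom :=
    (MonoidHom.eq_iff_eq_on_generator hz _ _).2 <|
      (sign_toPerm_units_of_forall_mem_zpowers hk hz).trans
        (toUnitHom_quadraticChar_of_forall_mem_zpowers hk hz).symm
  exact DFunLike.congr_fun this u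

variable {n : Type*} [Fintype n] [DecidableEq n]

theorem sign_toPerm_mulSingle (hk : ringChar k ≠ 2) (i : n) (u : kˣ) :
    Equiv.Perm.sign (MulAction.toPerm (Pi.mulSingle i u : n → kˣ) : Equiv.Perm (n → k)) =
      (quadraticChar k).toUnitHom u := by
  have hodd : Odd (Fintype.card ({j // j ≠ i} → k)) := by
    rw [Fintype.card_fun]
    exact (Nat.odd_iff.2 (FiniteField.odd_card_of_char_ne_two hk)).pow
  rw [Equiv.Perm.sign_eq_sign_of_equiv _
      (Equiv.prodCongrLeft fun _ : {j // j ≠ i} → k => (MulAction.toPerm u : Equiv.Perm k))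
      (Equiv.funSplitAt i k),
    Equiv.Perm.sign_prodCongrLeft, Finset.prod_const, Finset.card_univ,
    sign_toPerm_units_eq_quadraticChar hk, Int.units_pow_eq_pow_mod_two, Nat.odd_iff.1 hodd,
    pow_one]
  intro x
  ext j
  · simp [Equiv.funSplitAt, Equiv.piSplitAt]
  · simp [Equiv.funSplitAt, Equiv.piSplitAt, Pi.mulSingle_eq_of_ne j.2]

theorem sign_toPerm_toLin (hk : ringChar k ≠ 2) (g : GL n k) :
    Equiv.Perm.sign (MulAction.toPerm (GeneralLinearGroup.toLin g) : Equiv.Perm (n → k)) =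
      (quadraticChar k).toUnitHom (GeneralLinearGroup.det g) := by
  suffices h :
      (Equiv.Perm.sign.comp (MulAction.toPermHom (LinearMap.GeneralLinearGroup k (n → k))
        (n → k))).comp GeneralLinearGroup.toLin.toMonoidHom =
      (quadraticChar k).toUnitHom.comp GeneralLinearGroup.det from DFunLike.congr_fun h g
  refine generalLinearGroup_monoidHom_ext hk fun i u => ?_
  have hperm : (MulAction.toPerm (GeneralLinearGroup.toLin (diagonalGL n k (Pi.mulSingle i u))) :
      Equiv.Perm (n → k)) = MulAction.toPerm (Pi.mulSingle i u : n → kˣ) := by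
    ext v j
    exact mulVec_diagonal _ v j
  have hdet : GeneralLinearGroup.det (diagonalGL n k (Pi.mulSingle i u)) = u := by
    rw [det_diagonalGL, Fintype.prod_pi_mulSingle']
  rw [MonoidHom.comp_apply (quadraticChar k).toUnitHom, hdet, ← sign_toPerm_mulSingle hk i u]
  exact congrArg Equiv.Perm.sign hperm

theorem sign_linearEquiv_eq_quadraticChar_det (hk : ringChar k ≠ 2) {V : Type*} [AddCommGroup V]
    [Module k V] [Fintype V] [DecidableEq V] (f : V ≃ₗ[k] V) :
    Equiv.Perm.sign f.toEquiv = (quadraticChar k).toUnitHom (LinearEquiv.det f) := by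
  let e := (Module.finBasis k V).equivFun
  let f' := (LinearMap.GeneralLinearGroup.generalLinearEquiv k _).symm (e.symm ≪≫ₗ f ≪≫ₗ e)
  have hdet : GeneralLinearGroup.det (GeneralLinearGroup.toLin.symm f') = LinearEquiv.det f := by
    rw [← LinearEquiv.det_conj f e]
    ext
    rw [LinearEquiv.coe_det, ← LinearMap.det_toMatrix']
    rfl
  rw [← hdet, ← sign_toPerm_toLin hk, MulEquiv.apply_symm_apply]
  refine Equiv.Perm.sign_eq_sign_of_equiv _ _ e.toEquiv fun x => ?_
  change e (f x) = e (f (e.symm (e x)))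
  rw [e.symm_apply_apply]

end FrobeniusZolotarev

section MatrixModule

open scoped Matrix.Module Kronecker

variable {n : Type*} [Fintype n] [DecidableEq n]

theorem exists_linearEquiv_pi (n R M : Type*) [Fintype n] [DecidableEq n] [Nonempty n] [Ring R]
    [AddCommGroup M] [Module (Matrix n n R) M] [Module R M] [IsScalarTower R (Matrix n n R) M] :
    ∃ V : Submodule R M, Nonempty (M ≃ₗ[Matrix n n R] (n → V)) := by
  obtain ⟨i⟩ := ‹Nonempty n›
  -- Mathlib's Morita equivalence lets `R` act on `M` by restriction along `scalar n`.
  obtain rfl : ‹Module R M› = Module.compHom M (scalar n) := by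
    refine Module.ext' _ _ fun r x => ?_
    change _ = scalar n r • x
    rw [← one_smul (Matrix n n R) x, ← smul_assoc, ← smul_assoc, scalar_apply,
      ← smul_one_eq_diagonal, smul_eq_mul, mul_one]
  let := Module.compHom M (scalar (α := R) n)
  exact ⟨MatrixModCat.toModuleCatObj R M i,
    ⟨toModuleCatFromModuleCatLinearEquiv R (.of (Matrix n n R) M) i⟩⟩

section CommRing

variable {R V : Type*} [CommRing R] [AddCommGroup V] [Module R V]

theorem toMatrix_lsmul_pi {ι : Type*} [Fintype ι] [DecidableEq ι] (b : Module.Basis ι R V)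
    (A : Matrix n n R) :
    letI B := (Pi.basis fun _ : n => b).reindex (Equiv.sigmaEquivProd n ι)
    LinearMap.toMatrix B B (Algebra.lsmul R R (n → V) A) = A ⊗ₖ (1 : Matrix ι ι R) := by
  ext ⟨i, s⟩ ⟨j, t⟩
  simp [LinearMap.toMatrix_apply, one_apply, Pi.single_apply, Finsupp.single_apply, eq_comm]

theorem det_lsmul_pi [Module.Free R V] [Module.Finite R V] (A : Matrix n n R) :
    LinearMap.det (Algebra.lsmul R R (n → V) A) = A.det ^ Module.finrank R V := by
  classical
  nontriviality R
  let b := Module.Free.chooseBasis R V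
  rw [← LinearMap.det_toMatrix ((Pi.basis fun _ => b).reindex (Equiv.sigmaEquivProd n _)),
    toMatrix_lsmul_pi b, det_kronecker, det_one, one_pow, mul_one,
    Module.finrank_eq_card_chooseBasisIndex]

end CommRing

variable {k M : Type*} [Field k] [Nonempty n] [AddCommGroup M] [Module (Matrix n n k) M]
  [Module k M] [IsScalarTower k (Matrix n n k) M] {d : ℕ}

theorem det_lsmul_eq_det_pow [Module.Finite k M]
    (hd : Module.finrank k M = d * Fintype.card n) (A : Matrix n n k) :
    LinearMap.det (Algebra.lsmul k k M A) = A.det ^ d := by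
  obtain ⟨V, ⟨e⟩⟩ := exists_linearEquiv_pi n k M
  let e' := e.restrictScalars k
  have hV : Module.finrank k V = d := by
    have h := e'.finrank_eq
    rw [hd, Module.finrank_pi_fintype, Finset.sum_const, Finset.card_univ, smul_eq_mul,
      mul_comm] at h
    exact (Nat.eq_of_mul_eq_mul_left Fintype.card_pos h).symm
  have hconj : e'.toLinearMap ∘ₗ Algebra.lsmul k k M A ∘ₗ e'.symm.toLinearMap =
      Algebra.lsmul k k (n → V) A := by
    refine LinearMap.ext fun x => ?_
    simp [e']
  rw [← LinearMap.det_conj _ e', hconj, det_lsmul_pi, hV]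

variable [Fintype M] [DecidableEq M]

theorem sign_toPerm_eq_quadraticChar_det_pow [Fintype k] [DecidableEq k] (hk : ringChar k ≠ 2)
    (hd : Module.finrank k M = d * Fintype.card n) (g : GL n k) :
    Equiv.Perm.sign (MulAction.toPerm g : Equiv.Perm M) =
      (quadraticChar k).toUnitHom (GeneralLinearGroup.det g) ^ d := by
  let f : M ≃ₗ[k] M := DistribMulAction.toLinearEquiv k M g
  have hdet : LinearEquiv.det f = GeneralLinearGroup.det g ^ d := by
    ext
    rw [LinearEquiv.coe_det, Units.val_pow_eq_pow_val, GeneralLinearGroup.val_det_apply,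
      ← det_lsmul_eq_det_pow hd]
    rfl
  rw [← map_pow, ← hdet]
  exact sign_linearEquiv_eq_quadraticChar_det hk f

theorem sign_toPerm_eq_one_iff_det_pow [Fintype k] (hk : ringChar k ≠ 2)
    (hd : Module.finrank k M = d * Fintype.card n) (g : GL n k) :
    Equiv.Perm.sign (MulAction.toPerm g : Equiv.Perm M) = 1 ↔
      ((g : Matrix n n k).det ^ (Fintype.card k / 2)) ^ d = 1 := by
  classical
  rw [sign_toPerm_eq_quadraticChar_det_pow hk hd, ← map_pow,
    toUnitHom_quadraticChar_eq_one_iff hk, Units.val_pow_eq_pow_val,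
    GeneralLinearGroup.val_det_apply, pow_right_comm]

theorem forall_sign_toPerm_eq_one_iff_even [Finite k] (hk : ringChar k ≠ 2)
    (hd : Module.finrank k M = d * Fintype.card n) :
    (∀ g : GL n k, Equiv.Perm.sign (MulAction.toPerm g : Equiv.Perm M) = 1) ↔ Even d := by
  classical
  have := Fintype.ofFinite k
  simp only [sign_toPerm_eq_quadraticChar_det_pow hk hd]
  refine ⟨fun h => ?_, fun hd' g => ?_⟩
  · obtain ⟨a, ha⟩ := quadraticChar_exists_neg_one' hk
    obtain ⟨g, rfl⟩ := GeneralLinearGroup.det_surjective (n := n) a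
    have hg : (quadraticChar k).toUnitHom (GeneralLinearGroup.det g) = -1 := Units.ext ha
    by_contra hd'
    have := h g
    rw [hg, (Nat.not_even_iff_odd.1 hd').neg_one_pow] at this
    exact absurd this (by decide)
  · obtain ⟨r, rfl⟩ := hd'
    rw [pow_add, Int.units_mul_self]

end MatrixModule

/-- Let `k` be a finite field of odd cardinality `q` and `M` a module over `M_m(k)`,
viewed as a `k`-vector space via scalar matrices, of `k`-dimension `d·m`. For
`g ∈ GL_m(k)`, left multiplication by `g` is a permutation of `M` whose sign is `+1`
iff `((det g)^((q−1)/2))^d = 1`; consequently the sign is `+1` for every `g` iff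
`d` is even. -/
theorem stmt15 (k : Type*) [Field k] [Fintype k] (hq : Odd (Fintype.card k))
    (m : ℕ) (hm : 1 ≤ m)
    (M : Type*) [AddCommGroup M] [Module (Matrix (Fin m) (Fin m) k) M]
    [Module k M] [IsScalarTower k (Matrix (Fin m) (Fin m) k) M]
    [Fintype M] [DecidableEq M]
    (d : ℕ) (hdim : Module.finrank k M = d * m) :
    (∀ g : GL (Fin m) k,
      (Equiv.Perm.sign (MulAction.toPerm g : Equiv.Perm M) = 1 ↔
        ((g : Matrix (Fin m) (Fin m) k).det ^ ((Fintype.card k - 1) / 2)) ^ d = 1)) ∧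
    ((∀ g : GL (Fin m) k,
        Equiv.Perm.sign (MulAction.toPerm g : Equiv.Perm M) = 1) ↔ Even d) := by
  have hk : ringChar k ≠ 2 := fun h =>
    Nat.not_even_iff_odd.2 hq (Nat.even_iff.2 (FiniteField.even_card_of_char_two h))
  have hhalf : (Fintype.card k - 1) / 2 = Fintype.card k / 2 := by
    obtain ⟨r, hr⟩ := hq
    omega
  have : Nonempty (Fin m) := Fin.pos_iff_nonempty.1 hm
  have hd : Module.finrank k M = d * Fintype.card (Fin m) := by rw [hdim, Fintype.card_fin]
  rw [hhalf]
  exact ⟨sign_toPerm_eq_one_iff_det_pow hk hd, forall_sign_toPerm_eq_one_iff_even hk hd⟩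
end
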